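/- Let D_X > 0, suppose some channel in ℛ_X(D_X;X) attains the minimal induced intermediate distortion D_Y^min = min 𝒟*_Y(D_X;X), and suppose that for every channel k ∈ ℛ_X(D_X;X) with E[d_Y(g(X), g(X̂))] = D_Y^min there exist two points x̂₁ ≠ x̂₂ with nonzero marginal probabilities P(X̂ = x̂₁) > 0 and P(X̂ = x̂₂) > 0, identical intermediate representation g(x̂₁) = g(x̂₂), and at least one input x with P(X = x | X̂ = x̂₁) ≠ P(X = x | X̂ = x̂₂). Then the minimal achievable rate of distilling the intermediate layer directly is strictly lower than the input rate-distortion function: R_X(D_Y^min;Y) < R_X(D_X;X). -/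

import Mathlib

open scoped BigOperators

/-- Joint distribution P(a,b) = p(a)·k(a)(b) induced by a source `p` and a channel `k`,
as a real number. -/
noncomputable def jointP {A B : Type*} [Fintype A] [Fintype B] (p : PMF A) (k : A → PMF B)
    (a : A) (b : B) : ℝ :=
  (p a * k a b).toReal

/-- Marginal distribution of the second coordinate of the joint induced by `(p, k)`. -/
noncomputable def margSnd {A B : Type*} [Fintype A] [Fintype B] (p : PMF A) (k : A → PMF B)
    (b : B) : ℝ :=
  ∑ a, jointP p k a b

/-- Mutual information I(A;B) = ∑_{a,b} P(a,b)·log(P(a,b)/(P(a)·P(b))) of the joint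
induced by `(p, k)`; the convention 0·log 0 = 0 holds automatically in Lean. -/
noncomputable def mutualInfo {A B : Type*} [Fintype A] [Fintype B] (p : PMF A)
    (k : A → PMF B) : ℝ :=
  ∑ a, ∑ b, jointP p k a b * Real.log (jointP p k a b / ((p a).toReal * margSnd p k b))

/-- Expected distortion E[d(A,B)] under the joint induced by `(p, k)`. -/
noncomputable def expDist {A B : Type*} [Fintype A] [Fintype B] (p : PMF A) (k : A → PMF B)
    (d : A → B → ℝ) : ℝ :=
  ∑ a, ∑ b, jointP p k a b * d a b

/-- Rate-distortion function: infimum of mutual information over all channels `A → PMF B`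
meeting the expected-distortion constraint `≤ D`. -/
noncomputable def rate {A B : Type*} [Fintype A] [Fintype B] (p : PMF A) (d : A → B → ℝ)
    (D : ℝ) : ℝ :=
  sInf { r : ℝ | ∃ k : A → PMF B, expDist p k d ≤ D ∧ r = mutualInfo p k }

/-- Conditional probability P(A = a | B = b) under the joint induced by `(p, k)`. -/
noncomputable def condProb {A B : Type*} [Fintype A] [Fintype B] (p : PMF A) (k : A → PMF B)
    (a : A) (b : B) : ℝ :=
  jointP p k a b / margSnd p k b

section MutualInformation

variable {A B C : Type*} [Fintype A] [Fintype B] [Fintype C]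

theorem sub_le_mul_log_div {u w : ℝ} (hu : 0 ≤ u) (hw : 0 ≤ w) (h : w = 0 → u = 0) :
    u - w ≤ u * Real.log (u / w) := by
  rcases hu.eq_or_lt with rfl | hu
  · simpa using hw
  have hw : 0 < w := hw.lt_of_ne fun h0 => hu.ne' (h h0.symm)
  have hlog := Real.one_sub_inv_le_log_of_pos (div_pos hu hw)
  calc u - w = u * (1 - (u / w)⁻¹) := by field_simp
    _ ≤ _ := mul_le_mul_of_nonneg_left hlog hu.le

theorem sub_lt_mul_log_div {u w : ℝ} (hu : 0 ≤ u) (hw : 0 ≤ w) (h : w = 0 → u = 0)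
    (hne : u ≠ w) : u - w < u * Real.log (u / w) := by
  rcases hu.eq_or_lt with rfl | hu
  · simpa using hw.lt_of_ne hne
  have hw : 0 < w := hw.lt_of_ne fun h0 => hu.ne' (h h0.symm)
  have hlog := Real.log_lt_sub_one_of_pos (div_pos hw hu)
    (fun h1 => hne ((div_eq_one_iff_eq hu.ne').1 h1).symm)
  rw [← inv_div u w, Real.log_inv, inv_div] at hlog
  calc u - w = u * (1 - w / u) := by field_simp
    _ < _ := mul_lt_mul_of_pos_left (by linarith) hu

theorem jointP_nonneg (p : PMF A) (k : A → PMF B) (a : A) (b : B) : 0 ≤ jointP p k a b :=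
  ENNReal.toReal_nonneg

theorem margSnd_nonneg (p : PMF A) (k : A → PMF B) (b : B) : 0 ≤ margSnd p k b :=
  Finset.sum_nonneg fun a _ => jointP_nonneg p k a b

theorem jointP_le_margSnd (p : PMF A) (k : A → PMF B) (a : A) (b : B) :
    jointP p k a b ≤ margSnd p k b :=
  Finset.single_le_sum (f := fun a => jointP p k a b) (fun a _ => jointP_nonneg p k a b)
    (Finset.mem_univ a)

theorem PMF.sum_toReal (q : PMF B) : ∑ b, (q b).toReal = 1 := by
  rw [← ENNReal.toReal_sum fun b _ => q.apply_ne_top b, ← tsum_fintype (L := .unconditional B) q,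
    q.tsum_coe, ENNReal.toReal_one]

theorem sum_jointP (p : PMF A) (k : A → PMF B) (a : A) :
    ∑ b, jointP p k a b = (p a).toReal := by
  simp only [jointP, ENNReal.toReal_mul]
  rw [← Finset.mul_sum, PMF.sum_toReal, mul_one]

theorem sum_margSnd (p : PMF A) (k : A → PMF B) : ∑ b, margSnd p k b = 1 := by
  simp only [margSnd]
  rw [Finset.sum_comm]
  simp only [sum_jointP, PMF.sum_toReal]

theorem jointP_le_fst (p : PMF A) (k : A → PMF B) (a : A) (b : B) :
    jointP p k a b ≤ (p a).toReal := by
  rw [← sum_jointP p k a]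
  exact Finset.single_le_sum (f := jointP p k a) (fun b _ => jointP_nonneg p k a b)
    (Finset.mem_univ b)

theorem mutualInfo_nonneg (p : PMF A) (k : A → PMF B) : 0 ≤ mutualInfo p k := by
  calc (0 : ℝ) = ∑ a, ∑ b, (jointP p k a b - (p a).toReal * margSnd p k b) := by
        simp only [Finset.sum_sub_distrib, sum_jointP, ← Finset.mul_sum, sum_margSnd, mul_one,
          sub_self, Finset.sum_const_zero]
    _ ≤ mutualInfo p k := by
        refine Finset.sum_le_sum fun a _ => Finset.sum_le_sum fun b _ => ?_
        refine sub_le_mul_log_div (jointP_nonneg p k a b)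
          (mul_nonneg ENNReal.toReal_nonneg (margSnd_nonneg p k b)) fun h => ?_
        refine le_antisymm ?_ (jointP_nonneg p k a b)
        rcases mul_eq_zero.1 h with h | h
        · exact h ▸ jointP_le_fst p k a b
        · exact h ▸ jointP_le_margSnd p k a b

open Classical in
theorem jointP_map (p : PMF A) (k : A → PMF B) (f : B → C) (a : A) (c : C) :
    jointP p (fun a => (k a).map f) a c = ∑ b, if c = f b then jointP p k a b else 0 := by
  simp only [jointP, PMF.map_apply, tsum_fintype, Finset.mul_sum]
  rw [ENNReal.toReal_sum]
  · refine Finset.sum_congr rfl fun b _ => ?_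
    split_ifs <;> simp
  · intro b _
    split_ifs
    · exact ENNReal.mul_ne_top (p.apply_ne_top a) ((k a).apply_ne_top b)
    · simp

theorem sum_jointP_map_mul (p : PMF A) (k : A → PMF B) (f : B → C) (G : C → ℝ) (a : A) :
    ∑ c, jointP p (fun a => (k a).map f) a c * G c = ∑ b, jointP p k a b * G (f b) := by
  classical
  simp only [jointP_map, Finset.sum_mul]
  rw [Finset.sum_comm]
  simp

theorem expDist_map (p : PMF A) (k : A → PMF B) (f : B → C) (d : A → C → ℝ) :
    expDist p (fun a => (k a).map f) d = expDist p k fun a b => d a (f b) :=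
  Finset.sum_congr rfl fun a _ => sum_jointP_map_mul p k f (d a) a

theorem jointP_le_jointP_map (p : PMF A) (k : A → PMF B) (f : B → C) (a : A) (b : B) :
    jointP p k a b ≤ jointP p (fun a => (k a).map f) a (f b) := by
  classical
  rw [jointP_map]
  refine le_trans ?_ (Finset.single_le_sum
    (f := fun b' => if f b = f b' then jointP p k a b' else 0) (fun b' _ => ?_)
    (Finset.mem_univ b))
  · simp
  · split_ifs
    exacts [jointP_nonneg p k a b', le_rfl]

theorem margSnd_le_margSnd_map (p : PMF A) (k : A → PMF B) (f : B → C) (b : B) :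
    margSnd p k b ≤ margSnd p (fun a => (k a).map f) (f b) :=
  Finset.sum_le_sum fun a _ => jointP_le_jointP_map p k f a b

/-- The strict data processing inequality: merging two reconstruction points with different
posteriors strictly decreases the mutual information. -/
theorem mutualInfo_map_lt (p : PMF A) (k : A → PMF B) (f : B → C) {b₁ b₂ : B}
    (hf : f b₁ = f b₂) (h₁ : 0 < margSnd p k b₁) (h₂ : 0 < margSnd p k b₂)
    (hne : ∃ a, condProb p k a b₁ ≠ condProb p k a b₂) :
    mutualInfo p (fun a => (k a).map f) < mutualInfo p k := by
  set k' : A → PMF C := fun a => (k a).map f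
  -- the joint law obtained by resampling `b` from its conditional law given `f b`
  let W : A → B → ℝ := fun a b => margSnd p k b * condProb p k' a (f b)
  have hW_nonneg : ∀ a b, 0 ≤ W a b := fun a b =>
    mul_nonneg (margSnd_nonneg p k b) (div_nonneg (jointP_nonneg p k' a _) (margSnd_nonneg p k' _))
  have hW_pos : ∀ a b, 0 < jointP p k a b → 0 < W a b := fun a b h =>
    mul_pos (h.trans_le (jointP_le_margSnd p k a b))
      (div_pos (h.trans_le (jointP_le_jointP_map p k f a b))
        ((h.trans_le (jointP_le_margSnd p k a b)).trans_le (margSnd_le_margSnd_map p k f b)))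
  have hW_zero : ∀ a b, W a b = 0 → jointP p k a b = 0 := fun a b h => by
    by_contra h0
    exact (hW_pos a b ((jointP_nonneg p k a b).lt_of_ne' h0)).ne' h
  have hW_sum : ∑ a, ∑ b, (jointP p k a b - W a b) = 0 := by
    rw [Finset.sum_comm]
    refine Finset.sum_eq_zero fun b _ => ?_
    rw [Finset.sum_sub_distrib, ← Finset.mul_sum, sub_eq_zero]
    change margSnd p k b = margSnd p k b * ∑ a, jointP p k' a (f b) / margSnd p k' (f b)
    rw [← Finset.sum_div]
    change margSnd p k b = margSnd p k b * (margSnd p k' (f b) / margSnd p k' (f b))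
    rcases (margSnd_nonneg p k b).eq_or_lt with h | h
    · simp [← h]
    · rw [div_self (h.trans_le (margSnd_le_margSnd_map p k f b)).ne', mul_one]
  have hdiff : mutualInfo p k - mutualInfo p k' =
      ∑ a, ∑ b, jointP p k a b * Real.log (jointP p k a b / W a b) := by
    simp only [mutualInfo]
    rw [← Finset.sum_sub_distrib]
    refine Finset.sum_congr rfl fun a _ => ?_
    rw [sum_jointP_map_mul p k f
      (fun c => Real.log (jointP p k' a c / ((p a).toReal * margSnd p k' c))) a,
      ← Finset.sum_sub_distrib]
    refine Finset.sum_congr rfl fun b _ => ?_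
    rcases (jointP_nonneg p k a b).eq_or_lt with h | h
    · simp [← h]
    have hp := h.trans_le (jointP_le_fst p k a b)
    have hM := h.trans_le (jointP_le_margSnd p k a b)
    have hJ' : 0 < jointP p k' a (f b) := h.trans_le (jointP_le_jointP_map p k f a b)
    have hM' : 0 < margSnd p k' (f b) := hM.trans_le (margSnd_le_margSnd_map p k f b)
    rw [← mul_sub, ← Real.log_div (by positivity) (by positivity)]
    congr 2
    simp only [W, condProb]
    field_simp
  have hW_ne : ∃ a b, jointP p k a b ≠ W a b := by
    by_contra! hall
    obtain ⟨a, ha⟩ := hne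
    refine ha ?_
    rw [condProb, condProb, hall a b₁, hall a b₂]
    simp only [W]
    rw [mul_div_cancel_left₀ _ h₁.ne', mul_div_cancel_left₀ _ h₂.ne', hf]
  obtain ⟨a₀, b₀, h₀⟩ := hW_ne
  have hle : ∀ a b, jointP p k a b - W a b ≤
      jointP p k a b * Real.log (jointP p k a b / W a b) := fun a b =>
    sub_le_mul_log_div (jointP_nonneg p k a b) (hW_nonneg a b) (hW_zero a b)
  rw [← sub_pos, hdiff, ← hW_sum]
  refine Finset.sum_lt_sum (fun a _ => Finset.sum_le_sum fun b _ => hle a b)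
    ⟨a₀, Finset.mem_univ _, Finset.sum_lt_sum (fun b _ => hle a₀ b) ⟨b₀, Finset.mem_univ _, ?_⟩⟩
  exact sub_lt_mul_log_div (jointP_nonneg p k a₀ b₀) (hW_nonneg a₀ b₀) (hW_zero a₀ b₀) h₀

theorem rate_le_mutualInfo (p : PMF A) (k : A → PMF B) {d : A → B → ℝ} {D : ℝ}
    (h : expDist p k d ≤ D) : rate p d D ≤ mutualInfo p k :=
  csInf_le ⟨0, by rintro _ ⟨k, -, rfl⟩; exact mutualInfo_nonneg p k⟩ ⟨k, h, rfl⟩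

end MutualInformation

/-- If some X-optimal channel attains D_Y^min = min 𝒟*_Y(D_X;X), and every
X-optimal channel attaining D_Y^min has two distinct reconstruction points of positive
marginal probability with identical intermediate representation but differing posteriors,
then R_X(D_Y^min;Y) < R_X(D_X;X). -/
theorem distill_lt_input_rd
    {𝒳 𝒴 : Type*} [Fintype 𝒳] [Fintype 𝒴] [Nonempty 𝒳] [Nonempty 𝒴]
    (pX : PMF 𝒳) (g : 𝒳 → 𝒴)
    (dX : 𝒳 → 𝒳 → ℝ) (hdX : ∀ x x', 0 ≤ dX x x')
    (dY : 𝒴 → 𝒴 → ℝ) (hdY : ∀ y y', 0 ≤ dY y y')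
    (DX : ℝ) (hDX : 0 < DX)
    (kstar : 𝒳 → PMF 𝒳)
    (hk_dist : expDist pX kstar dX ≤ DX)
    (hk_rate : mutualInfo pX kstar = rate pX dX DX)
    (DYmin : ℝ)
    (hattain : DYmin = expDist pX kstar (fun x xhat => dY (g x) (g xhat)))
    (hmin : ∀ k : 𝒳 → PMF 𝒳, expDist pX k dX ≤ DX →
      mutualInfo pX k = rate pX dX DX →
      DYmin ≤ expDist pX k (fun x xhat => dY (g x) (g xhat)))
    (hmerge : ∀ k : 𝒳 → PMF 𝒳, expDist pX k dX ≤ DX →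
      mutualInfo pX k = rate pX dX DX →
      expDist pX k (fun x xhat => dY (g x) (g xhat)) = DYmin →
      ∃ xhat₁ xhat₂ : 𝒳, xhat₁ ≠ xhat₂ ∧
        0 < margSnd pX k xhat₁ ∧ 0 < margSnd pX k xhat₂ ∧
        g xhat₁ = g xhat₂ ∧
        ∃ x : 𝒳, condProb pX k x xhat₁ ≠ condProb pX k x xhat₂) :
    rate pX (fun x xhat => dY (g x) (g xhat)) DYmin < rate pX dX DX := by
  classical
  obtain ⟨x₁, x₂, -, h₁, h₂, hg, hne⟩ := hmerge kstar hk_dist hk_rate hattain.symm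
  let f : 𝒳 → 𝒳 := Function.update id x₂ x₁
  have hgf : ∀ x, g (f x) = g x := fun x => by
    by_cases h : x = x₂
    · subst h
      simp [f, hg]
    · simp [f, h]
  have hf : f x₁ = f x₂ := by
    by_cases h : x₁ = x₂ <;> simp [f, h]
  rw [← hk_rate]
  refine (rate_le_mutualInfo pX (fun x => (kstar x).map f) ?_).trans_lt
    (mutualInfo_map_lt pX kstar f hf h₁ h₂ hne)
  rw [expDist_map, hattain]
  simp only [hgf, le_refl]
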